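/- (Deletion theorem for r(A) for line arrangements.) Let A' be a line arrangement in P^2 and let H be a line not in A', with A = A' ∪ {H}, where both A and A' are essential. Set r = r(A). If the number of intersection points of A lying on H is at least r + 2, then r(A') = r − 1. -/

import Mathlib

open Classical MvPolynomial

variable {K : Type*} [Field K] [CharZero K] {ℓ : ℕ}

/-- A (central) hyperplane arrangement: a finite set of nonzero linear forms,
pairwise non-proportional. -/
def IsArrangement (A : Finset (MvPolynomial (Fin ℓ) K)) : Prop :=
  (∀ α ∈ A, α ≠ 0 ∧ α.IsHomogeneous 1) ∧
    ∀ α ∈ A, ∀ β ∈ A, α ≠ β → ∀ c : K, α ≠ c • β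

/-- The arrangement is essential: the common zero set of its forms is `{0}`. -/
def IsEssential (A : Finset (MvPolynomial (Fin ℓ) K)) : Prop :=
  ∀ v : Fin ℓ → K, (∀ α ∈ A, eval v α = 0) → v = 0

/-- The defining polynomial `Q(A)`. -/
noncomputable def Qpoly (A : Finset (MvPolynomial (Fin ℓ) K)) : MvPolynomial (Fin ℓ) K :=
  ∏ α ∈ A, α

/-- Apply a derivation `θ = Σ θ_j ∂_j` to a polynomial. -/
noncomputable def applyDer (θ : Fin ℓ → MvPolynomial (Fin ℓ) K)
    (f : MvPolynomial (Fin ℓ) K) : MvPolynomial (Fin ℓ) K :=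
  ∑ j, θ j * pderiv j f

/-- The minimal degree of a Jacobian relation `r(A)`. -/
noncomputable def mdr (A : Finset (MvPolynomial (Fin ℓ) K)) : ℕ :=
  sInf {r | ∃ θ : Fin ℓ → MvPolynomial (Fin ℓ) K, θ ≠ 0 ∧
    (∀ j, (θ j).IsHomogeneous r) ∧ applyDer θ (Qpoly A) = 0}

/-- The number of elements `|A^H|` of the restriction of `A` to `H`:
the number of distinct subspaces `H ∩ ker α_L`, `L ∈ A \ {H}`. -/
noncomputable def restCard (A : Finset (MvPolynomial (Fin ℓ) K))
    (H : MvPolynomial (Fin ℓ) K) : ℕ :=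
  ((A.erase H).image fun L => {v : Fin ℓ → K | eval v H = 0 ∧ eval v L = 0}).card

set_option linter.unusedSectionVars false
set_option linter.unusedVariables false

/-- The linear form with coefficient vector `a`. -/
noncomputable def linForm (a : Fin 3 → K) : MvPolynomial (Fin 3) K := ∑ i, C (a i) * X i

lemma exists_linForm {α : MvPolynomial (Fin 3) K} (h : α.IsHomogeneous 1) :
    ∃ a, α = linForm a := by
  have h1 : α ∈ homogeneousSubmodule (Fin 3) K 1 := h
  rw [homogeneousSubmodule_one_eq_span_X, Submodule.mem_span_range_iff_exists_fun] at h1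
  obtain ⟨c, hc⟩ := h1
  exact ⟨c, by simp [linForm, ← hc, smul_eq_C_mul]⟩

lemma eval_linForm (a v : Fin 3 → K) : eval v (linForm a) = ∑ i, a i * v i := by
  simp [linForm]

lemma applyDer_linForm (a : Fin 3 → K) (θ : Fin 3 → MvPolynomial (Fin 3) K) :
    applyDer θ (linForm a) = ∑ i, C (a i) * θ i := by
  simp only [applyDer, linForm, map_sum, Derivation.leibniz, pderiv_C, pderiv_X]
  simp [Fin.sum_univ_three, Pi.single_apply]
  ring

lemma isHomogeneous_linForm (a : Fin 3 → K) : (linForm a).IsHomogeneous 1 :=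
  IsHomogeneous.sum _ _ _ fun i _ => isHomogeneous_C_mul_X _ _

lemma applyDer_mul (θ : Fin 3 → MvPolynomial (Fin 3) K) (f g : MvPolynomial (Fin 3) K) :
    applyDer θ (f * g) = applyDer θ f * g + f * applyDer θ g := by
  simp [applyDer, Fin.sum_univ_three]
  ring

lemma prime_form {α : MvPolynomial (Fin 3) K} (h : α.IsHomogeneous 1) (h0 : α ≠ 0) :
    Prime α := by
  apply Irreducible.prime
  apply irreducible_of_totalDegree_eq_one (h.totalDegree h0)
  intro x hx
  by_contra hxu
  have : x = 0 := by
    by_contra h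
    exact hxu (isUnit_iff_ne_zero.mpr h)
  apply h0
  ext m
  simpa [this] using hx m

lemma hc_mul {m : ℕ} {Q : MvPolynomial (Fin 3) K} (hQ : Q.IsHomogeneous m)
    (g : MvPolynomial (Fin 3) K) (i : ℕ) :
    homogeneousComponent (m + i) (Q * g) = Q * homogeneousComponent i g := by
  have key : ∀ j, homogeneousComponent (m + i) (Q * homogeneousComponent j g) =
      if i = j then Q * homogeneousComponent j g else 0 := by
    intro j
    rw [homogeneousComponent_of_mem (m := m + i) (n := m + j)
      (hQ.mul (homogeneousComponent_isHomogeneous j g))]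
    simp
  conv_lhs => rw [← sum_homogeneousComponent g]
  rw [Finset.mul_sum, map_sum]
  simp only [key, Finset.sum_ite_eq]
  split_ifs with hi
  · rfl
  · rw [homogeneousComponent_eq_zero i g (by simpa using hi), mul_zero]

lemma homog_factor {m N : ℕ} {Q g : MvPolynomial (Fin 3) K} (hQ : Q.IsHomogeneous m)
    (h0 : Q ≠ 0) (h : (Q * g).IsHomogeneous N) :
    g = 0 ∨ ∃ k, N = m + k ∧ g.IsHomogeneous k := by
  have hz : ∀ i, m + i ≠ N → homogeneousComponent i g = 0 := by
    intro i hi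
    have h1 := hc_mul hQ g i
    rw [homogeneousComponent_of_mem h, if_neg hi] at h1
    exact (mul_eq_zero.mp h1.symm).resolve_left h0
  by_cases hm : m ≤ N
  · right
    obtain ⟨k, rfl⟩ := Nat.exists_eq_add_of_le hm
    refine ⟨k, rfl, ?_⟩
    have : g = homogeneousComponent k g := by
      conv_lhs => rw [← sum_homogeneousComponent g]
      by_cases hk : k ∈ Finset.range (g.totalDegree + 1)
      · rw [Finset.sum_eq_single_of_mem k hk]
        intro b _ hb
        exact hz b (by omega)
      · rw [homogeneousComponent_eq_zero k g (by simpa using hk)]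
        apply Finset.sum_eq_zero
        intro b hb
        apply hz b
        rintro h
        obtain rfl : b = k := by omega
        exact hk hb
    rw [this]
    exact homogeneousComponent_isHomogeneous k g
  · left
    rw [← sum_homogeneousComponent g]
    exact Finset.sum_eq_zero fun i _ => hz i (by omega)

/-- Independence of two coefficient vectors gives a dual pair and a common zero. -/
lemma exists_dual {h l : Fin 3 → K} (h0 : h ≠ 0) (hl : ∀ c : K, l ≠ c • h) :
    (∃ v : Fin 3 → K, v ≠ 0 ∧ ∑ i, h i * v i = 0 ∧ ∑ i, l i * v i = 0) ∧
    ∃ c e : Fin 3 → K, (∑ i, h i * c i = 1 ∧ ∑ i, l i * c i = 0) ∧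
      (∑ i, h i * e i = 0 ∧ ∑ i, l i * e i = 1) := by
  by_cases hk : h 0 * l 1 - h 1 * l 0 = 0 ∧ h 1 * l 2 - h 2 * l 1 = 0 ∧ h 2 * l 0 - h 0 * l 2 = 0
  · exfalso
    obtain ⟨k2, k0, k1⟩ := hk
    obtain ⟨m, hm⟩ := Function.ne_iff.mp h0
    simp only [Pi.zero_apply] at hm
    apply hl (l m / h m)
    ext j
    simp only [Pi.smul_apply, smul_eq_mul]
    field_simp
    fin_cases m <;> fin_cases j <;> simp <;> grind
  refine ⟨⟨![h 1 * l 2 - h 2 * l 1, h 2 * l 0 - h 0 * l 2, h 0 * l 1 - h 1 * l 0], ?_, ?_, ?_⟩, ?_⟩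
  · intro hv
    apply hk
    have e0 := congrFun hv 0
    have e1 := congrFun hv 1
    have e2 := congrFun hv 2
    simp at e0 e1 e2
    exact ⟨e2, e0, e1⟩
  · simp [Fin.sum_univ_three]
    ring
  · simp [Fin.sum_univ_three]
    ring
  · by_cases k2 : h 0 * l 1 - h 1 * l 0 = 0
    · by_cases k0 : h 1 * l 2 - h 2 * l 1 = 0
      · have k1 : h 2 * l 0 - h 0 * l 2 ≠ 0 := fun k1 => hk ⟨k2, k0, k1⟩
        obtain ⟨d, hd⟩ : ∃ d, (h 2 * l 0 - h 0 * l 2) * d = 1 := ⟨_, mul_inv_cancel₀ k1⟩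
        refine ⟨![-l 2 * d, 0, l 0 * d], ![h 2 * d, 0, -h 0 * d],
          ⟨?_, ?_⟩, ?_, ?_⟩ <;> simp [Fin.sum_univ_three] <;>
          first | ring1 | linear_combination hd
      · obtain ⟨d, hd⟩ : ∃ d, (h 1 * l 2 - h 2 * l 1) * d = 1 := ⟨_, mul_inv_cancel₀ k0⟩
        refine ⟨![0, l 2 * d, -l 1 * d], ![0, -h 2 * d, h 1 * d],
          ⟨?_, ?_⟩, ?_, ?_⟩ <;> simp [Fin.sum_univ_three] <;>
          first | ring1 | linear_combination hd
    · obtain ⟨d, hd⟩ : ∃ d, (h 0 * l 1 - h 1 * l 0) * d = 1 := ⟨_, mul_inv_cancel₀ k2⟩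
      refine ⟨![l 1 * d, -l 0 * d, 0], ![-h 1 * d, h 0 * d, 0],
          ⟨?_, ?_⟩, ?_, ?_⟩ <;> simp [Fin.sum_univ_three] <;>
          first | ring1 | linear_combination hd

/-- Two common zeros of independent forms are proportional. -/
lemma zeros_prop {h l : Fin 3 → K} (h0 : h ≠ 0) (hl : ∀ c : K, l ≠ c • h) {v w : Fin 3 → K}
    (hv : ∑ i, h i * v i = 0) (lv : ∑ i, l i * v i = 0)
    (hw : ∑ i, h i * w i = 0) (lw : ∑ i, l i * w i = 0) (i j : Fin 3) :
    w i * v j = w j * v i := by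
  obtain ⟨-, c, e, ⟨hc, lc⟩, he, le⟩ := exists_dual h0 hl
  simp only [Fin.sum_univ_three] at *
  obtain ⟨x0, hx0⟩ : ∃ x, x = w 1 * v 2 - w 2 * v 1 := ⟨_, rfl⟩
  obtain ⟨x1, hx1⟩ : ∃ x, x = w 2 * v 0 - w 0 * v 2 := ⟨_, rfl⟩
  obtain ⟨x2, hx2⟩ : ∃ x, x = w 0 * v 1 - w 1 * v 0 := ⟨_, rfl⟩
  have gen : ∀ k : Fin 3 → K, k 0 * v 0 + k 1 * v 1 + k 2 * v 2 = 0 →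
      k 0 * w 0 + k 1 * w 1 + k 2 * w 2 = 0 →
      k 0 * x1 = k 1 * x0 ∧ k 1 * x2 = k 2 * x1 ∧ k 2 * x0 = k 0 * x2 := by
    intro k kv kw
    subst hx0 hx1 hx2
    refine ⟨?_, ?_, ?_⟩
    · linear_combination (-v 2) * kw + w 2 * kv
    · linear_combination (-v 0) * kw + w 0 * kv
    · linear_combination (-v 1) * kw + w 1 * kv
  obtain ⟨a1, a2, a3⟩ := gen h hv hw
  obtain ⟨b1, b2, b3⟩ := gen l lv lw
  obtain ⟨s, hs⟩ : ∃ s, s = x0 * c 0 + x1 * c 1 + x2 * c 2 := ⟨_, rfl⟩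
  have l0 : l 0 * s = 0 := by
    subst hs; linear_combination x0 * lc + c 1 * b1 - c 2 * b3
  have l1 : l 1 * s = 0 := by
    subst hs; linear_combination x1 * lc - c 0 * b1 + c 2 * b2
  have l2 : l 2 * s = 0 := by
    subst hs; linear_combination x2 * lc + c 0 * b3 - c 1 * b2
  have s0 : s = 0 := by
    linear_combination (-s) * le + e 0 * l0 + e 1 * l1 + e 2 * l2
  have y0 : x0 = 0 := by
    rw [hs] at s0
    linear_combination (-x0) * hc + h 0 * s0 - c 1 * a1 + c 2 * a3
  have y1 : x1 = 0 := by
    rw [hs] at s0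
    linear_combination (-x1) * hc + h 1 * s0 + c 0 * a1 - c 2 * a2
  have y2 : x2 = 0 := by
    rw [hs] at s0
    linear_combination (-x2) * hc + h 2 * s0 - c 0 * a3 + c 1 * a2
  rw [hx0] at y0
  rw [hx1] at y1
  rw [hx2] at y2
  fin_cases i <;> fin_cases j <;> simp <;> grind

lemma mem_ideal {h l : Fin 3 → K} (h0 : h ≠ 0) (hl : ∀ c : K, l ≠ c • h)
    (M : MvPolynomial (Fin 3) K)
    (hM : ∀ v : Fin 3 → K, ∑ i, h i * v i = 0 → ∑ i, l i * v i = 0 → eval v M = 0) :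
    ∃ a b, M = linForm h * a + linForm l * b := by
  obtain ⟨-, c, e, ⟨hc, lc⟩, he, le⟩ := exists_dual h0 hl
  let σ : Fin 3 → MvPolynomial (Fin 3) K :=
    fun i => X i - linForm h * C (c i) - linForm l * C (e i)
  have hz : bind₁ σ M = 0 := by
    apply MvPolynomial.funext
    intro v
    rw [map_zero, ← aeval_eq_eval]
    rw [aeval_bind₁]
    simp only [aeval_eq_eval]
    apply hM
    · simp [σ, eval_linForm, Fin.sum_univ_three] at *
      linear_combination (-(h 0 * v 0 + h 1 * v 1 + h 2 * v 2)) * hc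
        - (l 0 * v 0 + l 1 * v 1 + l 2 * v 2) * he
    · simp [σ, eval_linForm, Fin.sum_univ_three] at *
      linear_combination (-(h 0 * v 0 + h 1 * v 1 + h 2 * v 2)) * lc
        - (l 0 * v 0 + l 1 * v 1 + l 2 * v 2) * le
  have hI : M - bind₁ σ M ∈ Ideal.span {linForm h, linForm l} := by
    set I := Ideal.span {linForm h, linForm l} with hIdef
    rw [← Ideal.Quotient.eq]
    have : (Ideal.Quotient.mkₐ K I) = (Ideal.Quotient.mkₐ K I).comp (bind₁ σ) := by
      apply MvPolynomial.algHom_ext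
      intro i
      simp only [AlgHom.comp_apply, bind₁_X_right, Ideal.Quotient.mkₐ_eq_mk]
      rw [Ideal.Quotient.eq, hIdef, Ideal.mem_span_pair]
      exact ⟨C (c i), C (e i), by simp only [σ]; ring⟩
    exact congrArg (fun f => f M) this
  rw [hz, sub_zero, Ideal.mem_span_pair] at hI
  obtain ⟨a, b, hab⟩ := hI
  exact ⟨a, b, by rw [← hab]; ring⟩

lemma dvd_of_many_zeros {ι : Type*} {h : Fin 3 → K} (h0 : h ≠ 0) (l : ι → Fin 3 → K) (k : ℕ) :
    ∀ (T : Finset ι) (M : MvPolynomial (Fin 3) K),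
    (∀ i ∈ T, ∀ c : K, l i ≠ c • h) →
    (∀ i ∈ T, ∀ j ∈ T, i ≠ j → ∀ v : Fin 3 → K, ∑ m, h m * v m = 0 →
      ∑ m, l i m * v m = 0 → ∑ m, l j m * v m = 0 → v = 0) →
    M.IsHomogeneous k → k < T.card →
    (∀ i ∈ T, ∀ v : Fin 3 → K, v ≠ 0 → ∑ m, h m * v m = 0 → ∑ m, l i m * v m = 0 →
      eval v M = 0) → linForm h ∣ M := by
  induction k with
  | zero =>
    intro T M hl hT hM hk hv
    obtain ⟨i, hi⟩ := Finset.card_pos.mp hk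
    obtain ⟨⟨v, v0, hv1, hv2⟩, -⟩ := exists_dual h0 (hl i hi)
    have := hv i hi v v0 hv1 hv2
    rw [← totalDegree_zero_iff_isHomogeneous, totalDegree_eq_zero_iff_eq_C] at hM
    rw [hM, eval_C] at this
    rw [hM, this]
    simp
  | succ k ih =>
    intro T M hl hT hM hk hv
    obtain ⟨i, hi⟩ := Finset.card_pos.mp (by omega : 0 < T.card)
    obtain ⟨a, b, hab⟩ := mem_ideal h0 (hl i hi) M (by
      intro v hv1 hv2
      by_cases v0 : v = 0
      · subst v0
        have : coeff 0 M = 0 := hM.coeff_eq_zero (by simp)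
        rw [eval_zero]
        simpa [constantCoeff_eq] using this
      · exact hv i hi v v0 hv1 hv2)
    have hM2 : M = linForm h * homogeneousComponent k a + linForm (l i) * homogeneousComponent k b := by
      rw [← hc_mul (isHomogeneous_linForm _), ← hc_mul (isHomogeneous_linForm _), ← map_add, ← hab,
        add_comm 1 k, homogeneousComponent_eq_self hM]
    have := ih (T.erase i) (homogeneousComponent k b)
      (fun j hj => hl j (Finset.mem_of_mem_erase hj))
      (fun j hj j' hj' => hT j (Finset.mem_of_mem_erase hj) j' (Finset.mem_of_mem_erase hj'))
      (homogeneousComponent_isHomogeneous k b)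
      (by rw [Finset.card_erase_of_mem hi]; omega)
      (by
        intro j hj v v0 hv1 hv2
        have e := hv j (Finset.mem_of_mem_erase hj) v v0 hv1 hv2
        rw [hM2] at e
        simp only [map_add, map_mul, eval_linForm, hv1, zero_mul, zero_add] at e
        refine (mul_eq_zero.mp e).resolve_left fun e1 => v0 ?_
        exact hT i hi j (Finset.mem_of_mem_erase hj) (Finset.ne_of_mem_erase hj).symm v hv1 e1 hv2)
    rw [hM2]
    exact dvd_add (dvd_mul_right _ _) (this.mul_left _)

lemma not_dvd_form {α β : MvPolynomial (Fin 3) K} (hα : α.IsHomogeneous 1)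
    (hβ : β.IsHomogeneous 1) (hβ0 : β ≠ 0) (hp : ∀ c : K, β ≠ c • α) : ¬ α ∣ β := by
  rintro ⟨g, rfl⟩
  have hα0 : α ≠ 0 := by rintro rfl; simp at hβ0
  rcases homog_factor hα hα0 hβ with rfl | ⟨k, hk, hg⟩
  · simp at hβ0
  · obtain rfl : k = 0 := by omega
    rw [← totalDegree_zero_iff_isHomogeneous, totalDegree_eq_zero_iff_eq_C] at hg
    apply hp (coeff 0 g)
    rw [smul_eq_C_mul, ← hg, mul_comm]

lemma Qpoly_ne_zero {A : Finset (MvPolynomial (Fin 3) K)} (hA : IsArrangement A) :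
    Qpoly A ≠ 0 := Finset.prod_ne_zero_iff.mpr fun α hα => (hA.1 α hα).1

lemma Qpoly_homog {A : Finset (MvPolynomial (Fin 3) K)} (hA : IsArrangement A) :
    (Qpoly A).IsHomogeneous A.card := by
  have := IsHomogeneous.prod A (fun α => α) (fun _ => 1) fun α hα => (hA.1 α hα).2
  simpa [Qpoly] using this

lemma applyDer_euler {A : Finset (MvPolynomial (Fin 3) K)} (hA : IsArrangement A)
    (q : MvPolynomial (Fin 3) K) :
    applyDer (fun j => q * X j) (Qpoly A) = q * ((A.card : MvPolynomial (Fin 3) K) * Qpoly A) := by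
  have := (Qpoly_homog hA).sum_X_mul_pderiv
  rw [nsmul_eq_mul] at this
  rw [← this, applyDer, Finset.mul_sum]
  simp only [mul_assoc]

lemma euler_zero {A : Finset (MvPolynomial (Fin 3) K)} (hA : IsArrangement A)
    (hne : A.Nonempty) {q : MvPolynomial (Fin 3) K}
    (h : applyDer (fun j => q * X j) (Qpoly A) = 0) : q = 0 := by
  rw [applyDer_euler hA] at h
  have hc : (A.card : MvPolynomial (Fin 3) K) ≠ 0 := by
    exact_mod_cast hne.card_pos.ne'
  simpa [hc, Qpoly_ne_zero hA] using h

lemma dvd_of_mem {A : Finset (MvPolynomial (Fin 3) K)} (hA : IsArrangement A)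
    {θ : Fin 3 → MvPolynomial (Fin 3) K} (h : applyDer θ (Qpoly A) = 0)
    {α : MvPolynomial (Fin 3) K} (hα : α ∈ A) : α ∣ applyDer θ α := by
  have hp := prime_form (hA.1 α hα).2 (hA.1 α hα).1
  have e : Qpoly A = α * ∏ β ∈ A.erase α, β := (Finset.mul_prod_erase A (fun β => β) hα).symm
  rw [e, applyDer_mul] at h
  have h2 : α ∣ applyDer θ α * ∏ β ∈ A.erase α, β := by
    rw [eq_neg_of_add_eq_zero_left h]
    exact (dvd_mul_right _ _).neg_right
  refine (hp.dvd_or_dvd h2).resolve_right fun h3 => ?_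
  obtain ⟨β, hβ, h4⟩ := (hp.dvd_finsetProd_iff _).mp h3
  have hβA := Finset.mem_of_mem_erase hβ
  exact not_dvd_form (hA.1 α hα).2 (hA.1 β hβA).2 (hA.1 β hβA).1
    (hA.2 β hβA α hα (Finset.ne_of_mem_erase hβ)) h4

lemma Qpoly_dvd {φ : Fin 3 → MvPolynomial (Fin 3) K} (A : Finset (MvPolynomial (Fin 3) K)) :
    (∀ α ∈ A, α ∣ applyDer φ α) → Qpoly A ∣ applyDer φ (Qpoly A) := by
  induction A using Finset.induction_on with
  | empty => intro _; simp [Qpoly]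
  | insert a s ha ih =>
    intro h
    have e : Qpoly (insert a s) = a * Qpoly s := Finset.prod_insert ha
    rw [e, applyDer_mul]
    exact dvd_add (mul_dvd_mul_right (h a (by simp)) _)
      (mul_dvd_mul_left _ (ih fun α hα => h α (by simp [hα])))

lemma homog_applyDer {n k : ℕ} {φ : Fin 3 → MvPolynomial (Fin 3) K} {f : MvPolynomial (Fin 3) K}
    (hφ : ∀ j, (φ j).IsHomogeneous k) (hf : f.IsHomogeneous n) :
    (applyDer φ f).IsHomogeneous (k + (n - 1)) :=
  IsHomogeneous.sum _ _ _ fun j _ => (hφ j).mul hf.pderiv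

lemma homog_mul_X {m k : ℕ} (hm : 0 < m) {Q q : MvPolynomial (Fin 3) K} (hQ : Q.IsHomogeneous m)
    (h0 : Q ≠ 0) (h : (Q * q).IsHomogeneous (k + (m - 1))) (j : Fin 3) :
    (q * X j).IsHomogeneous k := by
  rcases homog_factor hQ h0 h with rfl | ⟨k', hk, hq⟩
  · simpa using isHomogeneous_zero _ _ _
  · obtain rfl : k = k' + 1 := by omega
    exact hq.mul (isHomogeneous_X _ _)

lemma mdr_le {A : Finset (MvPolynomial (Fin 3) K)} (hA : IsArrangement A) (hne : A.Nonempty)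
    {k : ℕ} {φ : Fin 3 → MvPolynomial (Fin 3) K} (hφ : ∀ j, (φ j).IsHomogeneous k)
    (hd : Qpoly A ∣ applyDer φ (Qpoly A)) (hn : ∀ q, φ ≠ fun j => q * X j) : mdr A ≤ k := by
  obtain ⟨g, hg⟩ := hd
  have hh := homog_applyDer hφ (Qpoly_homog hA)
  rw [hg] at hh
  have hgX := homog_mul_X hne.card_pos (Qpoly_homog hA) (Qpoly_ne_zero hA) hh
  have hcK : (A.card : K) ≠ 0 := by exact_mod_cast hne.card_pos.ne'
  apply Nat.sInf_le
  refine ⟨fun j => φ j - (C (A.card : K)⁻¹ * g) * X j, ?_, ?_, ?_⟩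
  · intro h
    apply hn (C (A.card : K)⁻¹ * g)
    ext1 j
    exact sub_eq_zero.mp (congrFun h j)
  · intro j
    apply (hφ j).sub
    rw [mul_assoc]
    exact (hgX j).C_mul _
  · have e : applyDer (fun j => φ j - (C (A.card : K)⁻¹ * g) * X j) (Qpoly A) =
        applyDer φ (Qpoly A) - applyDer (fun j => (C (A.card : K)⁻¹ * g) * X j) (Qpoly A) := by
      simp [applyDer, sub_mul, Finset.sum_sub_distrib]
    rw [e, applyDer_euler hA, hg]
    have : C (A.card : K)⁻¹ * (A.card : MvPolynomial (Fin 3) K) = 1 := by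
      rw [← map_natCast (C : K →+* MvPolynomial (Fin 3) K), ← C_mul, inv_mul_cancel₀ hcK, C_1]
    linear_combination (-(g * Qpoly A)) * this

lemma mdr_spec {A : Finset (MvPolynomial (Fin 3) K)} (hA : IsArrangement A) (hne : A.Nonempty) :
    ∃ θ : Fin 3 → MvPolynomial (Fin 3) K, θ ≠ 0 ∧
    (∀ j, (θ j).IsHomogeneous (mdr A)) ∧ applyDer θ (Qpoly A) = 0 := by
  apply Nat.sInf_mem (s := {r | ∃ θ : Fin 3 → MvPolynomial (Fin 3) K, θ ≠ 0 ∧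
    (∀ j, (θ j).IsHomogeneous r) ∧ applyDer θ (Qpoly A) = 0})
  have hp : ∀ j, (pderiv j (Qpoly A)).IsHomogeneous (A.card - 1) :=
    fun j => (Qpoly_homog hA).pderiv
  by_cases h0 : pderiv 0 (Qpoly A) = 0 ∧ pderiv 1 (Qpoly A) = 0
  · refine ⟨0, fun j => if j = 0 then 1 else 0, ?_, ?_, ?_⟩
    · intro h
      simpa using congrFun h 0
    · intro j
      dsimp only
      split_ifs
      · exact isHomogeneous_one _ _
      · exact isHomogeneous_zero _ _ _
    · simp [applyDer, h0.1]
  · refine ⟨A.card - 1, ![pderiv 1 (Qpoly A), -pderiv 0 (Qpoly A), 0], ?_, ?_, ?_⟩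
    · intro h
      apply h0
      have e0 := congrFun h 0
      have e1 := congrFun h 1
      simp at e0 e1
      exact ⟨e1, e0⟩
    · intro j
      fin_cases j
      · exact hp 1
      · exact (hp 0).neg
      · exact isHomogeneous_zero _ _ _
    · simp [applyDer, Fin.sum_univ_three]
      ring

/-- The key step: a relation of low degree is a multiple of the Euler field modulo `H`. -/
lemma key_step {A' : Finset (MvPolynomial (Fin 3) K)}
    {H : MvPolynomial (Fin 3) K} (hH : H ∉ A') (hA : IsArrangement (insert H A'))
    {r : ℕ} (h : r + 2 ≤ restCard (insert H A') H) (hne : A'.Nonempty)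
    {θ : Fin 3 → MvPolynomial (Fin 3) K} (hθ : ∀ j, (θ j).IsHomogeneous r)
    (hd : ∀ α ∈ insert H A', α ∣ applyDer θ α) :
    ∃ q : MvPolynomial (Fin 3) K, ∀ j, (q * X j).IsHomogeneous r ∧ H ∣ θ j - q * X j := by
  have hA' : ∀ α ∈ A', α ≠ H := fun α hα e => hH (e ▸ hα)
  obtain ⟨η, hη⟩ := exists_linForm (hA.1 H (by simp)).2
  have hH0 := (hA.1 H (by simp)).1
  have hη0 : η ≠ 0 := by
    rintro rfl
    apply hH0
    simp [hη, linForm]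
  have hex : ∀ α : MvPolynomial (Fin 3) K, ∃ a, α ∈ A' → α = linForm a := by
    intro α
    by_cases hα : α ∈ A'
    · obtain ⟨a, ha⟩ := exists_linForm (hA.1 α (by simp [hα])).2
      exact ⟨a, fun _ => ha⟩
    · exact ⟨0, fun h => absurd h hα⟩
  choose a ha using hex
  have hap : ∀ α ∈ A', ∀ c : K, a α ≠ c • η := by
    intro α hα c hc
    apply hA.2 α (by simp [hα]) H (by simp) (hA' α hα) c
    rw [ha α hα, hc, hη]
    simp [linForm, Finset.smul_sum, smul_eq_C_mul, mul_assoc]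
  -- choice of representatives of the points on `H`
  set F : MvPolynomial (Fin 3) K → Set (Fin 3 → K) :=
    fun L => {v : Fin 3 → K | eval v H = 0 ∧ eval v L = 0} with hF
  have hT : r + 2 ≤ (A'.image F).card := by
    simpa [restCard, Finset.erase_insert hH] using h
  have hrep : ∀ Z : Set (Fin 3 → K), ∃ L, Z ∈ A'.image F → L ∈ A' ∧ F L = Z := by
    intro Z
    by_cases hZ : Z ∈ A'.image F
    · obtain ⟨L, hL, e⟩ := Finset.mem_image.mp hZ
      exact ⟨L, fun _ => ⟨hL, e⟩⟩
    · exact ⟨0, fun h => absurd h hZ⟩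
  choose g hg using hrep
  have hFm : ∀ L ∈ A', ∀ v, v ∈ F L ↔ ∑ m, η m * v m = 0 ∧ ∑ m, a L m * v m = 0 := by
    intro L hL v
    have e1 : eval v H = ∑ m, η m * v m := by rw [hη, eval_linForm]
    have e2 : eval v L = ∑ m, a L m * v m := by
      conv_lhs => rw [ha L hL, eval_linForm]
    simp only [hF, Set.mem_ofPred_eq, e1, e2]
  have hcross : ∀ i j, H ∣ θ i * X j - θ j * X i := by
    intro i j
    rw [hη]
    apply dvd_of_many_zeros hη0 (fun Z => a (g Z)) (r + 1) (A'.image F)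
    · intro Z hZ
      exact hap _ (hg Z hZ).1
    · intro Z hZ W hW hZW v v1 v2 v3
      by_contra v0
      apply hZW
      obtain ⟨m, hm⟩ := Function.ne_iff.mp v0
      simp only [Pi.zero_apply] at hm
      have sub : ∀ Z ∈ A'.image F, ∀ W ∈ A'.image F, ∑ m, a (g Z) m * v m = 0 →
          ∑ m, a (g W) m * v m = 0 → Z ⊆ W := by
        intro Z hZ W hW v2 v3 x hx
        rw [← (hg Z hZ).2, hFm _ (hg Z hZ).1] at hx
        rw [← (hg W hW).2, hFm _ (hg W hW).1]
        refine ⟨hx.1, ?_⟩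
        have hpr := zeros_prop hη0 (hap _ (hg Z hZ).1) v1 v2 hx.1 hx.2
        have : (∑ i, a (g W) i * x i) * v m = (∑ i, a (g W) i * v i) * x m := by
          rw [Finset.sum_mul, Finset.sum_mul]
          apply Finset.sum_congr rfl
          intro i _
          linear_combination a (g W) i * hpr i m
        rw [v3, zero_mul] at this
        exact (mul_eq_zero.mp this).resolve_right hm
      exact Set.Subset.antisymm (sub Z hZ W hW v2 v3) (sub W hW Z hZ v3 v2)
    · exact ((hθ i).mul (isHomogeneous_X _ _)).sub ((hθ j).mul (isHomogeneous_X _ _))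
    · omega
    · intro Z hZ v v0 v1 v2
      have ann : ∀ b : Fin 3 → K, linForm b ∣ applyDer θ (linForm b) → ∑ m, b m * v m = 0 →
          ∑ m, b m * eval v (θ m) = 0 := by
        intro b ⟨t, ht⟩ hb
        have := congrArg (eval v) ht
        rw [applyDer_linForm, map_mul, eval_linForm, hb, zero_mul, map_sum] at this
        simpa using this
      have e1 := ann η (by rw [← hη]; exact hd H (by simp)) v1
      have e2 := ann (a (g Z)) (by
        rw [← ha _ (hg Z hZ).1]
        exact hd _ (by simp [(hg Z hZ).1])) v2
      have := zeros_prop hη0 (hap _ (hg Z hZ).1) v1 v2 e1 e2 i j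
      simp [this]
  obtain ⟨L, hL⟩ := hne
  have hLi : L ∈ insert H A' := by simp [hL]
  obtain ⟨q, hq⟩ := hd L hLi
  refine ⟨q, fun j => ⟨?_, ?_⟩⟩
  · apply homog_mul_X one_pos (hA.1 L hLi).2 (hA.1 L hLi).1
    rw [← hq]
    exact homog_applyDer hθ (hA.1 L hLi).2
  · have hp := prime_form (hA.1 H (by simp)).2 hH0
    have hdv : H ∣ L * (θ j - q * X j) := by
      have e : L * (θ j - q * X j) = ∑ i, C (a L i) * (θ j * X i - θ i * X j) := by
        have e2 : L = ∑ i, C (a L i) * X i := ha L hL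
        have e3 : applyDer θ L = ∑ i, C (a L i) * θ i := by
          conv_lhs => rw [ha L hL]
          exact applyDer_linForm _ _
        rw [Fin.sum_univ_three] at e2 e3 ⊢
        linear_combination θ j * e2 + X j * hq - X j * e3
      rw [e]
      exact Finset.dvd_sum fun i _ => (hcross j i).mul_left _
    refine (hp.dvd_or_dvd hdv).resolve_left ?_
    exact not_dvd_form (hA.1 H (by simp)).2 (hA.1 L hLi).2 (hA.1 L hLi).1
      (hA.2 L hLi H (by simp) (hA' L hL))

/-- Deletion theorem for `r(A)` for line arrangements:
Let `A'` be a line arrangement in `P^2` and let `H` be a line not in `A'`, with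
`A = A' ∪ {H}`, where both `A` and `A'` are essential. Set `r = r(A)`. If the number
of intersection points of `A` lying on `H` is at least `r + 2`, then `r(A') = r − 1`. -/
theorem mdr_deletion_lines (A' : Finset (MvPolynomial (Fin 3) K))
    (H : MvPolynomial (Fin 3) K) (hH : H ∉ A')
    (hA' : IsArrangement A') (hA : IsArrangement (insert H A'))
    (hA'ess : IsEssential A') (hAess : IsEssential (insert H A'))
    (h : mdr (insert H A') + 2 ≤ restCard (insert H A') H) :
    mdr A' = mdr (insert H A') - 1 := by
  have hne : A'.Nonempty := by
    rw [Finset.nonempty_iff_ne_empty]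
    rintro rfl
    have := congrFun (hA'ess (fun _ => 1) (by simp)) 0
    simp at this
  have hneA : (insert H A').Nonempty := Finset.insert_nonempty _ _
  have hH1 := hA.1 H (by simp)
  have eQ : Qpoly (insert H A') = H * Qpoly A' := Finset.prod_insert hH
  -- first inequality
  have le1 : mdr (insert H A') ≤ mdr A' + 1 := by
    obtain ⟨θ, hθ0, hθ, hθQ⟩ := mdr_spec hA' hne
    have es : ∀ f, applyDer (fun j => H * θ j) f = H * applyDer θ f := by
      intro f
      simp [applyDer, Finset.mul_sum, mul_assoc]
    apply mdr_le hA hneA (φ := fun j => H * θ j)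
    · intro j
      rw [add_comm]
      exact hH1.2.mul (hθ j)
    · rw [es, eQ, applyDer_mul, hθQ, mul_zero, add_zero]
      exact ⟨applyDer θ H, by ring⟩
    · intro q hq
      have h1 := es (Qpoly A')
      rw [hθQ, mul_zero, hq] at h1
      have q0 := euler_zero hA' hne h1
      apply hθ0
      ext1 j
      have := congrFun hq j
      rw [q0, zero_mul] at this
      exact (mul_eq_zero.mp this).resolve_left hH1.1
  -- second inequality
  obtain ⟨θ, hθ0, hθ, hθQ⟩ := mdr_spec hA hneA
  have hd : ∀ α ∈ insert H A', α ∣ applyDer θ α := fun α hα => dvd_of_mem hA hθQ hα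
  obtain ⟨q, hq⟩ := key_step hH hA h hne hθ hd
  choose φ hφ using fun j => (hq j).2
  have hnE : ∀ p, θ ≠ fun j => p * X j := by
    intro p hp
    rw [hp] at hθQ
    have p0 := euler_zero hA hneA hθQ
    apply hθ0
    rw [hp, p0]
    ext1 j
    simp
  have hφh : ∀ j, φ j = 0 ∨ ∃ k, mdr (insert H A') = 1 + k ∧ (φ j).IsHomogeneous k := by
    intro j
    apply homog_factor hH1.2 hH1.1
    rw [← hφ j]
    exact (hθ j).sub (hq j).1
  have hnφ : ∀ p, φ ≠ fun j => p * X j := by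
    intro p hp
    apply hnE (q + H * p)
    ext1 j
    have := hφ j
    rw [hp] at this
    linear_combination this
  obtain ⟨j0, hj0⟩ : ∃ j, φ j ≠ 0 := by
    by_contra hc
    push Not at hc
    apply hnφ 0
    ext1 j
    simp [hc j]
  obtain ⟨k, hk, -⟩ := (hφh j0).resolve_left hj0
  have le2 : mdr A' ≤ k := by
    apply mdr_le hA' hne (φ := φ)
    · intro j
      rcases hφh j with e | ⟨k', hk', hj⟩
      · rw [e]
        exact isHomogeneous_zero _ _ _
      · obtain rfl : k = k' := by omega
        exact hj
    · apply Qpoly_dvd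
      intro α hα
      have hαi : α ∈ insert H A' := by simp [hα]
      have hα1 := hA.1 α hαi
      have e : H * applyDer φ α = applyDer θ α - q * α := by
        have hE := hα1.2.sum_X_mul_pderiv
        rw [one_smul] at hE
        simp only [applyDer, Fin.sum_univ_three] at hE ⊢
        linear_combination (-pderiv 0 α) * hφ 0 - pderiv 1 α * hφ 1 - pderiv 2 α * hφ 2 - q * hE
      have hdv : α ∣ H * applyDer φ α := by
        rw [e]
        exact dvd_sub (hd α hαi) (dvd_mul_left _ _)
      refine ((prime_form hα1.2 hα1.1).dvd_or_dvd hdv).resolve_left ?_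
      refine not_dvd_form hα1.2 hH1.2 hH1.1 (hA.2 H (by simp) α hαi ?_)
      rintro rfl
      exact hH hα
    · exact hnφ
  omega
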